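/- Let 𝐮 be the standard sequence over {a, b} whose slope has continued fraction expansion θ = [0, 1, 3, 1, 1, 1, …] (partial quotients a₁ = 1, a₂ = 3, and aₙ = 1 for all n ≥ 3), and let 𝐱 = colour(𝐮, (123456)^ω, (1′2′3′4′5′6′)^ω). Then the critical exponent of 𝐱 satisfies E(𝐱) > 11/10; in particular, 𝐱 contains a nonempty factor of exponent at least 1 + 105/1038 = 1143/1038. -/

import Mathlib

open Filter
open scoped ENNReal

namespace BalancedCE

variable {α : Type*} {β : Type*}

/-- The factor of `v` of length `n` starting at position `i`. -/
def factorAt (v : ℕ → α) (i n : ℕ) : List α := (List.range n).map fun k => v (i + k)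

/-- `u` is a factor of the sequence `v`. -/
def IsFactor (v : ℕ → α) (u : List α) : Prop := ∃ i, factorAt v i u.length = u

/-- The word `w` occurs in the sequence `v` at position `i`. -/
def OccursAt (v : ℕ → α) (w : List α) (i : ℕ) : Prop := factorAt v i w.length = w

/-- A sequence is balanced if counts of each letter in equal-length factors differ by at most 1. -/
def Balanced [DecidableEq α] (v : ℕ → α) : Prop :=
  ∀ (a : α) (u w : List α), IsFactor v u → IsFactor v w → u.length = w.length →
    |(u.count a : ℤ) - (w.count a : ℤ)| ≤ 1

def EventuallyPeriodic (v : ℕ → α) : Prop :=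
  ∃ p, 0 < p ∧ ∃ N, ∀ n, N ≤ n → v (n + p) = v n

def Recurrent (v : ℕ → α) : Prop :=
  ∀ u : List α, IsFactor v u → ∀ N : ℕ, ∃ i, N ≤ i ∧ OccursAt v u i

/-- `i < j` are consecutive occurrences of the letter `a` in `v`. -/
def ConsecOcc (v : ℕ → α) (a : α) (i j : ℕ) : Prop :=
  i < j ∧ v i = a ∧ v j = a ∧ ∀ k, i < k → k < j → v k ≠ a

/-- `p` is a period of the finite word `z` (i.e. `z` is a prefix of `u^ω` with `|u| = p`). -/
def IsPeriod (z : List α) (p : ℕ) : Prop :=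
  0 < p ∧ ∀ i, i + p < z.length → z[i]? = z[i + p]?

/-- The minimal period of a finite word. -/
noncomputable def minPeriod (z : List α) : ℕ := sInf {p | IsPeriod z p}

/-- The exponent of a finite word: its length divided by its minimal period. -/
noncomputable def expE (z : List α) : ℝ≥0∞ := (z.length : ℝ≥0∞) / (minPeriod z : ℝ≥0∞)

/-- The critical exponent of a sequence: the supremum of exponents of nonempty factors. -/
noncomputable def criticalExponent (v : ℕ → α) : ℝ≥0∞ :=
  ⨆ (z : List α) (_ : IsFactor v z ∧ z ≠ []), expE z

/-- A Pansiot sequence over a `d`-letter alphabet. -/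
def Pansiot (d : ℕ) (v : ℕ → α) : Prop :=
  (∀ i : ℕ, (factorAt v i (d - 1)).Nodup) ∧
  ∀ (a : α) (i j : ℕ), ConsecOcc v a i j → v (i + 1) ≠ v (j + 1)

/-- The letter `a` has frequency `ρ` in the sequence `v`. -/
def HasFreq [DecidableEq α] (v : ℕ → α) (a : α) (ρ : ℝ) : Prop :=
  Tendsto (fun n => ((factorAt v 0 n).count a : ℝ) / n) atTop (nhds ρ)

/-- Factor complexity of a sequence. -/
noncomputable def complexity (v : ℕ → α) (n : ℕ) : ℕ :=
  Set.ncard {u : List α | IsFactor v u ∧ u.length = n}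

/-- Sturmian sequences: aperiodic binary sequences of factor complexity `n + 1`.
Convention: the letter `a` is `false`, the letter `b` is `true`. -/
def Sturmian (u : ℕ → Bool) : Prop :=
  ¬ EventuallyPeriodic u ∧ ∀ n, complexity u n = n + 1

/-- Prepending a letter to a sequence. -/
def consSeq (c : α) (v : ℕ → α) : ℕ → α := fun n =>
  match n with
  | 0 => c
  | Nat.succ m => v m

/-- A standard sequence: a Sturmian sequence `u` such that `a·u` and `b·u` are Sturmian. -/
def IsStandard (u : ℕ → Bool) : Prop :=
  Sturmian u ∧ Sturmian (consSeq false u) ∧ Sturmian (consSeq true u)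

/-- The slope of a binary sequence, with the convention `ρ_b > ρ_a` (`a = false`, `b = true`). -/
def HasSlope (u : ℕ → Bool) (θ : ℝ) : Prop :=
  ∃ ρa ρb : ℝ, HasFreq u false ρa ∧ HasFreq u true ρb ∧ ρa < ρb ∧ θ = ρa / ρb

/-- `θ` has the (infinite) continued fraction expansion `[0; a 1, a 2, a 3, …]`:
there are complete quotients' fractional parts `t n ∈ (0,1)` with `t 0 = θ` and
`1 / t n = a (n+1) + t (n+1)` for all `n`. (The value `a 0` is irrelevant.) -/
def HasCF (θ : ℝ) (a : ℕ → ℕ) : Prop :=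
  ∃ t : ℕ → ℝ, t 0 = θ ∧ ∀ n, 0 < t n ∧ t n < 1 ∧ 1 / t n = (a (n + 1) : ℝ) + t (n + 1)

/-- Number of positions `< n` where `u` takes the value `c`. -/
def countBefore (u : ℕ → Bool) (c : Bool) (n : ℕ) : ℕ :=
  ((List.range n).filter fun i => u i = c).length

/-- The colouring of a binary sequence `u` by `y` (on the `a = false` positions)
and `y'` (on the `b = true` positions). -/
def colour (u : ℕ → Bool) (y : ℕ → α) (y' : ℕ → β) : ℕ → α ⊕ β := fun n =>
  if u n = false then Sum.inl (y (countBefore u false n))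
  else Sum.inr (y' (countBefore u true n))

/-- A constant gap sequence: periodic, and consecutive occurrences of each occurring
letter are at a constant distance. -/
def ConstantGap (y : ℕ → α) : Prop :=
  (∃ p, 0 < p ∧ ∀ n, y (n + p) = y n) ∧
  ∀ c : α, (∃ i, y i = c) → ∃ g, 0 < g ∧ ∀ i j, ConsecOcc y c i j → j - i = g

/-- The discolouration (projection) map: letters of the first alphabet go to `a = false`,
letters of the second alphabet go to `b = true`. -/
def proj : α ⊕ β → Bool := Sum.elim (fun _ => false) (fun _ => true)

/-- `v` is a return word to `w` in the sequence `z`. -/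
def IsReturnWord (z : ℕ → α) (w v : List α) : Prop :=
  ∃ i j : ℕ, i < j ∧ OccursAt z w i ∧ OccursAt z w j ∧
    (∀ k, i < k → k < j → ¬ OccursAt z w k) ∧ v = factorAt z i (j - i)

def RightSpecial (z : ℕ → α) (w : List α) : Prop :=
  ∃ a b : α, a ≠ b ∧ IsFactor z (w ++ [a]) ∧ IsFactor z (w ++ [b])

def LeftSpecial (z : ℕ → α) (w : List α) : Prop :=
  ∃ a b : α, a ≠ b ∧ IsFactor z (a :: w) ∧ IsFactor z (b :: w)

def Bispecial (z : ℕ → α) (w : List α) : Prop := LeftSpecial z w ∧ RightSpecial z w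

/-- `o` enumerates, in increasing order, all occurrences of `w` in `z`. -/
def IsOccEnum (z : ℕ → α) (w : List α) (o : ℕ → ℕ) : Prop :=
  StrictMono o ∧ (∀ n, OccursAt z w (o n)) ∧ ∀ i, OccursAt z w i → ∃ n, o n = i

/-- The derived sequence of `z` with respect to the occurrence enumeration `o` of a factor:
its `n`-th letter is the return word between the `n`-th and `(n+1)`-st occurrences. -/
def derivedSeq (z : ℕ → α) (o : ℕ → ℕ) : ℕ → List α :=
  fun n => factorAt z (o n) (o (n + 1) - o n)

/-- The slope of a sequence over a two-letter alphabet: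
the ratio of the smaller letter frequency to the larger one. -/
def HasSlope2 {γ : Type*} [DecidableEq γ] (z : ℕ → γ) (θ : ℝ) : Prop :=
  ∃ (c c' : γ) (ρ ρ' : ℝ), c ≠ c' ∧ (∀ n, z n = c ∨ z n = c') ∧
    HasFreq z c ρ ∧ HasFreq z c' ρ' ∧ ρ < ρ' ∧ θ = ρ / ρ'

/-- The purely cyclic constant gap sequence `(0 1 ⋯ (δ-1))^ω` over `ZMod δ`. -/
def cyc (δ : ℕ) : ℕ → ZMod δ := fun n => (n : ZMod δ)

/-- The colouring `colour(u, (1 2 ⋯ δ)^ω, (1' 2' ⋯ δ')^ω)` over `2δ` letters. -/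
def colourCyc (δ : ℕ) (u : ℕ → Bool) : ℕ → ZMod δ ⊕ ZMod δ := colour u (cyc δ) (cyc δ)

/-!
Write `0` for `false` and `1` for `true`. Sturmian sequences are balanced: a shortest unbalanced
pair of factors has the form `0w0`, `1w1` with `w` a palindrome, so `w` is right special; the right
special factor `cw` of the next length then recurs too soon after an occurrence of `dwd`, where
`d ≠ c`, for the palindrome to allow it.

If `u` is standard, then `0u` and `1u` are balanced as well. Hence, `ρ` being the frequency of
`true`, the number of letters `true` in the prefix of length `n` of `u` lies between
`(n + 1) * ρ - 1` and `(n + 1) * ρ`. For the given slope, `97 / 173` is a convergent of `ρ` and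
`1038 = 6 * 173`, `582 = 6 * 97`: shifting by `1038` passes exactly `582` letters `true` and `456`
letters `false`, all multiples of `6`, from each of `106` consecutive positions, so the colouring
repeats with period `1038` over a window of `1038 + 105` letters.
-/

theorem length_factorAt (v : ℕ → α) (i n : ℕ) : (factorAt v i n).length = n := by
  simp [factorAt]

theorem getElem?_factorAt (v : ℕ → α) (i : ℕ) {k n : ℕ} (hk : k < n) :
    (factorAt v i n)[k]? = some (v (i + k)) := by
  simp [factorAt, hk]

theorem factorAt_add (v : ℕ → α) (i m n : ℕ) :
    factorAt v i (m + n) = factorAt v i m ++ factorAt v (i + m) n := by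
  simp [factorAt, List.range_add, Function.comp_def, add_assoc]

theorem factorAt_one (v : ℕ → α) (i : ℕ) : factorAt v i 1 = [v i] := by
  simp [factorAt]

theorem factorAt_succ (v : ℕ → α) (i n : ℕ) :
    factorAt v i (n + 1) = factorAt v i n ++ [v (i + n)] := by
  rw [factorAt_add, factorAt_one]

theorem factorAt_succ' (v : ℕ → α) (i n : ℕ) :
    factorAt v i (n + 1) = v i :: factorAt v (i + 1) n := by
  rw [add_comm n 1, factorAt_add, factorAt_one, List.singleton_append]

theorem isFactor_factorAt (v : ℕ → α) (i n : ℕ) : IsFactor v (factorAt v i n) :=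
  ⟨i, by rw [length_factorAt]⟩

theorem IsFactor.of_infix {v : ℕ → α} {w z : List α} (hz : IsFactor v z) (hw : w <:+: z) :
    IsFactor v w := by
  obtain ⟨i, hi⟩ := hz
  obtain ⟨s, t, rfl⟩ := hw
  rw [List.length_append, factorAt_add, List.length_append, factorAt_add] at hi
  obtain ⟨hsw, -⟩ := List.append_inj hi (by simp [length_factorAt])
  exact ⟨i + s.length, (List.append_inj hsw (length_factorAt ..)).2⟩

theorem IsFactor.exists_append_singleton {v : ℕ → α} {w : List α} (hw : IsFactor v w) :
    ∃ c, IsFactor v (w ++ [c]) := by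
  obtain ⟨i, hi⟩ := hw
  refine ⟨v (i + w.length), i, ?_⟩
  rw [List.length_append, List.length_singleton, factorAt_succ, hi]

theorem RightSpecial.of_suffix {v : ℕ → α} {w z : List α} (hz : RightSpecial v z)
    (hw : w <:+ z) : RightSpecial v w := by
  obtain ⟨a, b, hab, ha, hb⟩ := hz
  have infix_append (c : α) : w ++ [c] <:+: z ++ [c] := by
    obtain ⟨s, rfl⟩ := hw
    exact ⟨s, [], by simp⟩
  exact ⟨a, b, hab, ha.of_infix (infix_append a), hb.of_infix (infix_append b)⟩

theorem RightSpecial.isFactor {v : ℕ → α} {w : List α} (hw : RightSpecial v w) :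
    IsFactor v w := by
  obtain ⟨a, -, -, ha, -⟩ := hw
  exact ha.of_infix (List.prefix_append w [a]).isInfix

theorem rightSpecial_bool_iff {x : ℕ → Bool} {w : List Bool} :
    RightSpecial x w ↔ IsFactor x (w ++ [true]) ∧ IsFactor x (w ++ [false]) := by
  constructor
  · rintro ⟨_ | _, _ | _, hne, ha, hb⟩
    exacts [absurd rfl hne, ⟨hb, ha⟩, ⟨ha, hb⟩, absurd rfl hne]
  · rintro ⟨ht, hf⟩
    exact ⟨true, false, Bool.noConfusion, ht, hf⟩

theorem eq_of_factorAt_eq_of_not_rightSpecial {v : ℕ → α} {i j n : ℕ}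
    (hij : factorAt v i n = factorAt v j n) (hi : ¬ RightSpecial v (factorAt v i n)) :
    v (i + n) = v (j + n) := by
  by_contra hne
  refine hi ⟨v (i + n), v (j + n), hne, ?_, ?_⟩
  · exact factorAt_succ v i n ▸ isFactor_factorAt ..
  · exact hij ▸ factorAt_succ v j n ▸ isFactor_factorAt ..

theorem setOf_isFactor_length_succ (x : ℕ → Bool) (n : ℕ) :
    {w | IsFactor x w ∧ w.length = n + 1} =
      (· ++ [true]) '' {w | IsFactor x (w ++ [true]) ∧ w.length = n} ∪
        (· ++ [false]) '' {w | IsFactor x (w ++ [false]) ∧ w.length = n} := by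
  ext w
  constructor
  · rintro ⟨hw, hn⟩
    obtain rfl | ⟨w', c, rfl⟩ := List.eq_nil_or_concat' w
    · simp at hn
    · cases c
      · exact Or.inr ⟨w', ⟨hw, by simpa using hn⟩, rfl⟩
      · exact Or.inl ⟨w', ⟨hw, by simpa using hn⟩, rfl⟩
  · rintro (⟨w, ⟨hw, rfl⟩, rfl⟩ | ⟨w, ⟨hw, rfl⟩, rfl⟩) <;> exact ⟨hw, by simp⟩

theorem complexity_succ (x : ℕ → Bool) (n : ℕ) :
    complexity x (n + 1) =
      complexity x n + {w | RightSpecial x w ∧ w.length = n}.ncard := by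
  let E (c : Bool) : Set (List Bool) := {w | IsFactor x (w ++ [c]) ∧ w.length = n}
  have finite_E (c : Bool) : (E c).Finite :=
    (List.finite_length_eq Bool n).subset fun _ hw => hw.2
  have union_E : {w | IsFactor x w ∧ w.length = n} = E true ∪ E false := by
    ext w
    constructor
    · rintro ⟨hw, hn⟩
      obtain ⟨_ | _, hc⟩ := hw.exists_append_singleton
      exacts [Or.inr ⟨hc, hn⟩, Or.inl ⟨hc, hn⟩]
    · rintro (⟨hw, hn⟩ | ⟨hw, hn⟩) <;>
        exact ⟨hw.of_infix (List.prefix_append w _).isInfix, hn⟩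
  have inter_E : {w | RightSpecial x w ∧ w.length = n} = E true ∩ E false := by
    ext w
    exact (and_congr_left' rightSpecial_bool_iff).trans and_and_right
  have disjoint_images : Disjoint ((· ++ [true]) '' E true) ((· ++ [false]) '' E false) := by
    rw [Set.disjoint_left]
    rintro _ ⟨w, -, rfl⟩ ⟨w', -, h⟩
    simpa using congrArg List.getLast? h
  rw [complexity, setOf_isFactor_length_succ,
    Set.ncard_union_eq disjoint_images ((finite_E _).image _) ((finite_E _).image _),
    Set.ncard_image_of_injective _ (List.append_left_injective _),
    Set.ncard_image_of_injective _ (List.append_left_injective _),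
    ← Set.ncard_union_add_ncard_inter _ _ (finite_E _) (finite_E _),
    ← union_E, ← inter_E, complexity]

theorem Sturmian.existsUnique_rightSpecial {x : ℕ → Bool} (hx : Sturmian x) (n : ℕ) :
    ∃! w, RightSpecial x w ∧ w.length = n := by
  have hcard : {w | RightSpecial x w ∧ w.length = n}.ncard = 1 := by
    have := complexity_succ x n
    rw [hx.2, hx.2] at this
    omega
  obtain ⟨s, hs⟩ := Set.ncard_eq_one.mp hcard
  exact Set.singleton_iff_unique_mem.mp ⟨s, hs⟩

theorem eventuallyPeriodic_of_factorAt_add_eq {v : ℕ → α} {n b p : ℕ} (hp : 0 < p)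
    (hb : factorAt v (b + p) n = factorAt v b n)
    (hns : ∀ k < p, ¬ RightSpecial v (factorAt v (b + k) n)) : EventuallyPeriodic v := by
  have window_periodic (r : ℕ) : factorAt v (b + r + p) n = factorAt v (b + r) n ∧
      ¬ RightSpecial v (factorAt v (b + r) n) := by
    induction r using Nat.strong_induction_on with
    | _ r ih =>
      constructor
      · rcases r with _ | r
        · simpa using hb
        · obtain ⟨heq, hr⟩ := ih r (by omega)
          have hlast := eq_of_factorAt_eq_of_not_rightSpecial heq.symm hr
          have hext : factorAt v (b + r + p) (n + 1) = factorAt v (b + r) (n + 1) := by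
            rw [factorAt_succ, factorAt_succ, heq, hlast]
          rw [factorAt_succ', factorAt_succ'] at hext
          rw [← add_assoc, add_right_comm (b + r) 1 p]
          exact (List.cons.inj hext).2
      · rcases lt_or_ge r p with hrp | hpr
        · exact hns r hrp
        · obtain ⟨heq, hr⟩ := ih (r - p) (by omega)
          rwa [← heq, add_assoc b, Nat.sub_add_cancel hpr] at hr
  refine ⟨p, hp, b + n, fun t ht => ?_⟩
  obtain ⟨r, rfl⟩ := Nat.exists_eq_add_of_le ht
  obtain ⟨heq, hr⟩ := window_periodic r
  have hlast := eq_of_factorAt_eq_of_not_rightSpecial heq.symm hr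
  rw [show b + n + r + p = b + r + p + n by omega, show b + n + r = b + r + n by omega, hlast]

theorem eventuallyPeriodic_of_forall_factorAt_ne [Finite α] {v : ℕ → α} {b : ℕ} {s : List α}
    (hs : IsFactor v s)
    (huniq : ∀ w, RightSpecial v w → w.length = s.length → w = s)
    (hne : ∀ k < complexity v s.length, factorAt v (b + k) s.length ≠ s) :
    EventuallyPeriodic v := by
  let L : Set (List α) := {w | IsFactor v w ∧ w.length = s.length}
  have finite_L : L.Finite := (List.finite_length_eq α s.length).subset fun _ hw => hw.2
  have card_lt : (L \ {s}).ncard < (Set.Iio (complexity v s.length)).ncard := by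
    rw [Set.ncard_Iio_nat]
    exact Set.ncard_sdiff_singleton_lt_of_mem ⟨hs, rfl⟩ finite_L
  obtain ⟨k, hk, l, hl, hkl, heq⟩ := Set.exists_ne_map_eq_of_ncard_lt_of_maps_to card_lt
    (f := fun k => factorAt v (b + k) s.length)
    (fun k hk => ⟨⟨isFactor_factorAt .., length_factorAt ..⟩, hne k hk⟩)
    (finite_L.subset Set.sdiff_subset)
  wlog hlt : k < l generalizing k l
  · exact this l hl k hk hkl.symm heq.symm (by omega)
  refine eventuallyPeriodic_of_factorAt_add_eq (n := s.length) (b := b + k) (p := l - k)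
    (by omega) ?_ fun r hr hspecial => ?_
  · rw [show b + k + (l - k) = b + l by omega]
    exact heq.symm
  · rw [add_assoc] at hspecial
    have hl : l < complexity v s.length := hl
    exact hne (k + r) (by omega) (huniq _ hspecial (length_factorAt ..))

theorem Sturmian.exists_factorAt_eq_of_rightSpecial {x : ℕ → Bool} (hx : Sturmian x)
    {s : List Bool} (hs : RightSpecial x s) (b : ℕ) :
    ∃ k ≤ s.length, factorAt x (b + k) s.length = s := by
  by_contra! hne
  refine hx.1 <| eventuallyPeriodic_of_forall_factorAt_ne hs.isFactor (b := b)
    (fun w hw hlen => (hx.existsUnique_rightSpecial s.length).unique ⟨hw, hlen⟩ ⟨hs, rfl⟩) ?_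
  rw [hx.2]
  exact fun k hk => hne k (by omega)

theorem eq_of_forall_count_take_eq {l₁ l₂ : List Bool} (hlen : l₁.length = l₂.length)
    (h : ∀ k, (l₁.take k).count true = (l₂.take k).count true) : l₁ = l₂ := by
  induction l₁ generalizing l₂ with
  | nil => exact (List.length_eq_zero_iff.mp hlen.symm).symm
  | cons a t₁ ih =>
    obtain _ | ⟨b, t₂⟩ := l₂
    · simp at hlen
    · obtain rfl : a = b := by
        have := h 1
        cases a <;> cases b <;> simp_all
      rw [ih (by simpa using hlen) fun k => by simpa [List.count_cons] using h (k + 1)]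

theorem exists_count_true_add_two_le_of_not_balanced {x : ℕ → Bool} (hx : ¬ Balanced x) :
    ∃ u v, IsFactor x u ∧ IsFactor x v ∧ u.length = v.length ∧
      u.count true + 2 ≤ v.count true := by
  simp only [Balanced, not_forall, not_le] at hx
  obtain ⟨a, u, v, hu, hv, huv, habs⟩ := hx
  have hu_count := u.count_true_add_count_false
  have hv_count := v.count_true_add_count_false
  rcases le_total (u.count true) (v.count true) with hle | hle
  · refine ⟨u, v, hu, hv, huv, ?_⟩
    cases a <;> grind
  · refine ⟨v, u, hv, hu, huv.symm, ?_⟩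
    cases a <;> grind

/-- Two equally long factors `u`, `v` of a binary sequence witnessing that it is not balanced, `v`
having at least two more letters `true` than `u`, and of smallest possible length. -/
structure MinimalUnbalancedPair (x : ℕ → Bool) (u v : List Bool) : Prop where
  isFactor_left : IsFactor x u
  isFactor_right : IsFactor x v
  length_eq : u.length = v.length
  count_add_two_le : u.count true + 2 ≤ v.count true
  count_le_of_length_lt : ∀ {u' v' : List Bool}, IsFactor x u' → IsFactor x v' →
    u'.length = v'.length → u'.length < u.length → v'.count true ≤ u'.count true + 1

theorem exists_minimalUnbalancedPair {x : ℕ → Bool} (hx : ¬ Balanced x) :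
    ∃ u v, MinimalUnbalancedPair x u v := by
  classical
  have hex : ∃ n, ∃ u v, IsFactor x u ∧ IsFactor x v ∧ u.length = n ∧ v.length = n ∧
      u.count true + 2 ≤ v.count true := by
    obtain ⟨u, v, hu, hv, hlen, hcount⟩ := exists_count_true_add_two_le_of_not_balanced hx
    exact ⟨_, u, v, hu, hv, rfl, hlen.symm, hcount⟩
  obtain ⟨u, v, hu, hv, hun, hvn, hcount⟩ := Nat.find_spec hex
  refine ⟨u, v, hu, hv, hun.trans hvn.symm, hcount, fun {u' v'} hu' hv' hlen hlt => ?_⟩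
  by_contra! hlt_count
  exact Nat.find_min hex (hun ▸ hlt) ⟨u', v', hu', hv', rfl, hlen.symm, hlt_count⟩

namespace MinimalUnbalancedPair

variable {x : ℕ → Bool}

theorem count_eq_of_append {u₁ u₂ v₁ v₂ : List Bool}
    (h : MinimalUnbalancedPair x (u₁ ++ u₂) (v₁ ++ v₂)) (hlen : u₁.length = v₁.length)
    (hu₁ : u₁ ≠ []) (hu₂ : u₂ ≠ []) :
    v₁.count true = u₁.count true + 1 ∧ v₂.count true = u₂.count true + 1 := by
  have hlen' := h.length_eq
  have hcount := h.count_add_two_le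
  have hpos₁ := List.length_pos_iff.mpr hu₁
  have hpos₂ := List.length_pos_iff.mpr hu₂
  simp only [List.length_append, List.count_append] at hlen' hcount
  have hprefix := h.count_le_of_length_lt
    (h.isFactor_left.of_infix (List.prefix_append u₁ u₂).isInfix)
    (h.isFactor_right.of_infix (List.prefix_append v₁ v₂).isInfix) hlen
    (by rw [List.length_append]; omega)
  have hsuffix := h.count_le_of_length_lt
    (h.isFactor_left.of_infix (List.suffix_append u₁ u₂).isInfix)
    (h.isFactor_right.of_infix (List.suffix_append v₁ v₂).isInfix) (by omega)
    (by rw [List.length_append]; omega)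
  omega

theorem exists_eq {u v : List Bool} (h : MinimalUnbalancedPair x u v) :
    ∃ w, u = false :: (w ++ [false]) ∧ v = true :: (w ++ [true]) := by
  have exists_letters (z : List Bool) (hz : 2 ≤ z.length) : ∃ a w b, z = a :: (w ++ [b]) := by
    obtain _ | ⟨a, z⟩ := z
    · simp at hz
    · obtain rfl | ⟨w, b, rfl⟩ := List.eq_nil_or_concat' z
      · simp at hz
      · exact ⟨a, w, b, rfl⟩
  have letters_eq (a c : Bool) (h : [c].count true = [a].count true + 1) :
      a = false ∧ c = true := by
    decide +revert
  have hv_len : 2 ≤ v.length := by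
    have := h.count_add_two_le.trans List.count_le_length
    omega
  obtain ⟨a, w, b, rfl⟩ := exists_letters u (h.length_eq ▸ hv_len)
  obtain ⟨c, w', d, rfl⟩ := exists_letters v hv_len
  have hlen : w.length = w'.length := by simpa using h.length_eq
  have hfirst : [c].count true = [a].count true + 1 :=
    (count_eq_of_append (u₁ := [a]) (v₁ := [c]) h rfl (by simp) (by simp)).1
  have hlast : [d].count true = [b].count true + 1 :=
    (count_eq_of_append (u₁ := a :: w) (v₁ := c :: w') h (by simpa) (by simp) (by simp)).2
  obtain ⟨rfl, rfl⟩ : a = false ∧ c = true := letters_eq a c hfirst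
  obtain ⟨rfl, rfl⟩ : b = false ∧ d = true := letters_eq b d hlast
  suffices hw : w = w' by exact ⟨w, rfl, by rw [hw]⟩
  refine eq_of_forall_count_take_eq hlen fun k => ?_
  rw [← w.take_append_drop k, ← w'.take_append_drop k, List.append_assoc, List.append_assoc] at h
  have := (count_eq_of_append (u₁ := false :: w.take k) (v₁ := true :: w'.take k) h
    (by simp [hlen]) (by simp) (by simp)).1
  simpa using this.symm

/-- The prefixes and suffixes of `w` of equal length contain the same number of letters `true`:
otherwise one of them, extended by a letter of `u` or `v` on the outer side, would give a shorter
unbalanced pair. -/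
theorem reverse_eq {w : List Bool}
    (h : MinimalUnbalancedPair x (false :: (w ++ [false])) (true :: (w ++ [true]))) :
    w.reverse = w := by
  refine eq_of_forall_count_take_eq w.length_reverse fun k => ?_
  rw [List.take_reverse, List.count_reverse]
  have take_infix (c : Bool) : c :: w.take k <:+: c :: (w ++ [c]) :=
    ⟨[], w.drop k ++ [c], by simp [← List.append_assoc]⟩
  have drop_infix (c : Bool) : w.drop (w.length - k) ++ [c] <:+: c :: (w ++ [c]) :=
    ⟨c :: w.take (w.length - k), [], by simp [← List.append_assoc]⟩
  have length_drop_eq : (w.drop (w.length - k)).length = (w.take k).length := by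
    rw [List.length_drop, List.length_take]
    omega
  have hle := h.count_le_of_length_lt (h.isFactor_left.of_infix (drop_infix false))
    (h.isFactor_right.of_infix (take_infix true)) (by simp [length_drop_eq])
    (by simp [length_drop_eq])
  have hge := h.count_le_of_length_lt (h.isFactor_left.of_infix (take_infix false))
    (h.isFactor_right.of_infix (drop_infix true)) (by simp [length_drop_eq]) (by simp)
  simp only [List.count_cons_self, List.count_cons_of_ne, List.count_append, List.count_nil, ne_eq,
    Bool.false_eq_true, not_false_eq_true] at hle hge
  omega

end MinimalUnbalancedPair

theorem exists_palindrome_of_not_balanced {x : ℕ → Bool} (hx : ¬ Balanced x) :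
    ∃ w : List Bool, w.reverse = w ∧ ∀ c, IsFactor x (c :: (w ++ [c])) := by
  obtain ⟨u, v, h⟩ := exists_minimalUnbalancedPair hx
  obtain ⟨w, rfl, rfl⟩ := h.exists_eq
  exact ⟨w, h.reverse_eq, fun c => by cases c; exacts [h.isFactor_left, h.isFactor_right]⟩

theorem eq_of_palindrome_of_factorAt_eq_cons {v : ℕ → α} {w : List α} {b k : ℕ} {c d : α}
    (hw : w.reverse = w) (hb : factorAt v b (w.length + 2) = d :: (w ++ [d]))
    (hk : k ≤ w.length + 1) (hc : factorAt v (b + k) (w.length + 1) = c :: w) : c = d := by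
  have letter_b {i : ℕ} (hi : i < w.length + 2) : (d :: (w ++ [d]))[i]? = some (v (b + i)) :=
    hb ▸ getElem?_factorAt v b hi
  have letter_bk {i : ℕ} (hi : i < w.length + 1) : (c :: w)[i]? = some (v (b + k + i)) :=
    hc ▸ getElem?_factorAt v (b + k) hi
  have first_b : d = v b := by simpa using letter_b (i := 0) (by omega)
  have last_b : d = v (b + (w.length + 1)) := by simpa using letter_b (i := w.length + 1) (by omega)
  have first_bk : c = v (b + k) := by simpa using letter_bk (i := 0) (by omega)
  obtain _ | k := k
  · exact first_bk.trans first_b.symm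
  obtain rfl | hkw : k = w.length ∨ k < w.length := by omega
  · exact first_bk.trans last_b.symm
  apply Option.some_injective
  calc some c = w[k]? := by
        rw [first_bk, ← letter_b (by omega), List.getElem?_cons_succ, List.getElem?_append_left hkw]
    _ = w[w.length - 1 - k]? := by rw [← List.getElem?_reverse hkw, hw]
    _ = some d := by
        rw [← List.getElem?_cons_succ (a := c), letter_bk (by omega), last_b]
        congr 2
        omega

theorem Sturmian.balanced {x : ℕ → Bool} (hx : Sturmian x) : Balanced x := by
  by_contra hbal
  obtain ⟨w, hpal, hfactor⟩ := exists_palindrome_of_not_balanced hbal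
  obtain ⟨s, ⟨hs, hslen⟩, -⟩ := hx.existsUnique_rightSpecial (w.length + 1)
  obtain _ | ⟨c, t⟩ := s
  · simp at hslen
  have hw : RightSpecial x w := rightSpecial_bool_iff.mpr
    ⟨(hfactor true).of_infix (List.suffix_cons ..).isInfix,
      (hfactor false).of_infix (List.suffix_cons ..).isInfix⟩
  obtain rfl : t = w := (hx.existsUnique_rightSpecial w.length).unique
    ⟨hs.of_suffix (List.suffix_cons c t), by simpa using hslen⟩ ⟨hw, rfl⟩
  obtain ⟨b, hb⟩ := hfactor (!c)
  obtain ⟨k, hk, hkc⟩ := hx.exists_factorAt_eq_of_rightSpecial hs b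
  rw [List.length_cons] at hk hkc
  refine Bool.self_ne_not c (eq_of_palindrome_of_factorAt_eq_cons hpal ?_ hk hkc)
  simpa using hb

theorem mul_le_count_factorAt [DecidableEq α] {v : ℕ → α} {c : α} {A N : ℕ}
    (h : ∀ i, A ≤ (factorAt v i N).count c) (k : ℕ) : k * A ≤ (factorAt v 0 (k * N)).count c := by
  induction k with
  | zero => simp
  | succ k ih =>
    rw [Nat.succ_mul, Nat.succ_mul, factorAt_add, List.count_append]
    exact add_le_add ih (h _)

theorem count_factorAt_le_mul [DecidableEq α] {v : ℕ → α} {c : α} {B N : ℕ}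
    (h : ∀ i, (factorAt v i N).count c ≤ B) (k : ℕ) : (factorAt v 0 (k * N)).count c ≤ k * B := by
  induction k with
  | zero => simp [factorAt]
  | succ k ih =>
    rw [Nat.succ_mul, Nat.succ_mul, factorAt_add, List.count_append]
    exact add_le_add ih (h _)

namespace HasFreq

theorem tendsto_count_factorAt_mul_div [DecidableEq α] {v : ℕ → α} {c : α} {ρ : ℝ}
    (hρ : HasFreq v c ρ) {N : ℕ} (hN : 0 < N) :
    Tendsto (fun k : ℕ => ((factorAt v 0 (k * N)).count c : ℝ) / k) atTop (nhds (N * ρ)) := by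
  have hN' : (N : ℝ) ≠ 0 := by positivity
  refine ((hρ.comp (tendsto_id.atTop_mul_const' hN)).const_mul (N : ℝ)).congr fun k => ?_
  simp only [Function.comp_apply, id_eq, Nat.cast_mul]
  field_simp

theorem le_mul_of_forall_le [DecidableEq α] {v : ℕ → α} {c : α} {ρ : ℝ} (hρ : HasFreq v c ρ)
    {A N : ℕ} (hN : 0 < N) (h : ∀ i, A ≤ (factorAt v i N).count c) : (A : ℝ) ≤ N * ρ := by
  refine ge_of_tendsto (hρ.tendsto_count_factorAt_mul_div hN) ?_
  filter_upwards [eventually_gt_atTop 0] with k hk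
  rw [le_div_iff₀' (by positivity)]
  exact_mod_cast mul_le_count_factorAt h k

theorem mul_le_of_forall_le [DecidableEq α] {v : ℕ → α} {c : α} {ρ : ℝ} (hρ : HasFreq v c ρ)
    {B N : ℕ} (hN : 0 < N) (h : ∀ i, (factorAt v i N).count c ≤ B) : N * ρ ≤ B := by
  refine le_of_tendsto (hρ.tendsto_count_factorAt_mul_div hN) ?_
  filter_upwards [eventually_gt_atTop 0] with k hk
  rw [div_le_iff₀' (by positivity)]
  exact_mod_cast count_factorAt_le_mul h k

theorem add_eq_one {x : ℕ → Bool} {ρ σ : ℝ} (hρ : HasFreq x false ρ) (hσ : HasFreq x true σ) :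
    ρ + σ = 1 := by
  refine tendsto_nhds_unique (hρ.add hσ) (tendsto_const_nhds.congr' ?_)
  filter_upwards [eventually_ne_atTop 0] with n hn
  rw [← add_div, ← Nat.cast_add, List.count_false_add_count_true, length_factorAt,
    div_self (Nat.cast_ne_zero.mpr hn)]

end HasFreq

theorem HasSlope.hasFreq_true {u : ℕ → Bool} {θ : ℝ} (hθ : HasSlope u θ) :
    HasFreq u true (1 / (1 + θ)) := by
  obtain ⟨ρa, ρb, ha, hb, hlt, rfl⟩ := hθ
  have hsum := ha.add_eq_one hb
  have hρb : ρb ≠ 0 := by linarith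
  have : 1 / (1 + ρa / ρb) = ρb := by
    rw [one_add_div hρb, add_comm, hsum, one_div_one_div]
  rwa [this]

theorem countBefore_eq_count (u : ℕ → Bool) (c : Bool) (n : ℕ) :
    countBefore u c n = (factorAt u 0 n).count c := by
  rw [countBefore, ← List.countP_eq_length_filter, List.count, factorAt, List.countP_map]
  simp [Function.comp_def, beq_eq_decide]

theorem countBefore_true_add_countBefore_false (u : ℕ → Bool) (n : ℕ) :
    countBefore u true n + countBefore u false n = n := by
  rw [countBefore_eq_count, countBefore_eq_count, List.count_true_add_count_false, length_factorAt]

theorem countBefore_succ (u : ℕ → Bool) (c : Bool) (n : ℕ) :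
    countBefore u c (n + 1) = countBefore u c n + if u n = c then 1 else 0 := by
  simp [countBefore_eq_count, factorAt_succ, List.count_singleton]

theorem factorAt_consSeq_zero (c : α) (v : ℕ → α) (n : ℕ) :
    factorAt (consSeq c v) 0 (n + 1) = c :: factorAt v 0 n := by
  rw [factorAt_succ']
  simp [factorAt, consSeq, Nat.one_add]

theorem factorAt_consSeq_succ (c : α) (v : ℕ → α) (i n : ℕ) :
    factorAt (consSeq c v) (i + 1) n = factorAt v i n := by
  simp [factorAt, consSeq, Nat.add_right_comm i 1]

theorem abs_count_cons_sub_count_le_one {u : ℕ → Bool} {d : Bool} (hu : Balanced (consSeq d u))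
    (c : Bool) (i n : ℕ) :
    |((d :: factorAt u 0 n).count c : ℤ) - (factorAt u i (n + 1)).count c| ≤ 1 := by
  rw [← factorAt_consSeq_zero, ← factorAt_consSeq_succ d u]
  exact hu c _ _ (isFactor_factorAt ..) (isFactor_factorAt ..) (by simp [length_factorAt])

theorem countBefore_le_count_factorAt {u : ℕ → Bool} {c : Bool} (hu : Balanced (consSeq c u))
    (i n : ℕ) : countBefore u c n ≤ (factorAt u i (n + 1)).count c := by
  have := abs_le.mp (abs_count_cons_sub_count_le_one hu c i n)
  rw [List.count_cons_self, ← countBefore_eq_count] at this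
  omega

theorem count_factorAt_le_countBefore_add_one {u : ℕ → Bool} {c d : Bool} (hdc : d ≠ c)
    (hu : Balanced (consSeq d u)) (i n : ℕ) :
    (factorAt u i (n + 1)).count c ≤ countBefore u c n + 1 := by
  have := abs_le.mp (abs_count_cons_sub_count_le_one hu c i n)
  rw [List.count_cons_of_ne hdc, ← countBefore_eq_count] at this
  omega

theorem HasFreq.countBefore_bounds {u : ℕ → Bool} {ρ : ℝ}
    (hρ : HasFreq u true ρ) (hu : IsStandard u) (n : ℕ) :
    countBefore u true n ≤ (n + 1) * ρ ∧ (n + 1) * ρ ≤ countBefore u true n + 1 := by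
  constructor
  · exact_mod_cast hρ.le_mul_of_forall_le n.succ_pos
      fun i => countBefore_le_count_factorAt hu.2.2.balanced i n
  · exact_mod_cast hρ.mul_le_of_forall_le n.succ_pos
      fun i => count_factorAt_le_countBefore_add_one Bool.false_ne_true hu.2.1.balanced i n

theorem HasFreq.countBefore_add_eq {u : ℕ → Bool} {ρ : ℝ} (hρ : HasFreq u true ρ)
    (hu : IsStandard u) {n p q : ℕ} (hq : q < p * ρ)
    (hM : ∀ M : ℕ, (n + 1 : ℕ) * ρ ≤ M → (n + 1 + p : ℕ) * ρ < M + q) :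
    countBefore u true (n + p) = countBefore u true n + q := by
  obtain ⟨hle, hge⟩ := hρ.countBefore_bounds hu n
  obtain ⟨hle', hge'⟩ := hρ.countBefore_bounds hu (n + p)
  have hlt := hM (countBefore u true n + 1) (by exact_mod_cast hge)
  push_cast at hlt hle' hge'
  have hupper : (countBefore u true (n + p) : ℝ) < countBefore u true n + q + 1 := by linarith
  have hlower : (countBefore u true n + q : ℝ) < countBefore u true (n + p) + 1 := by linarith
  norm_cast at hupper hlower
  omega

theorem add_1038_mul_lt {ρ : ℝ} (hlo : 254 / 453 < ρ) (hhi : ρ < 411 / 733) {N M : ℕ}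
    (hN : N ∈ Set.Icc 388 493) (hM : N * ρ ≤ M) : ((N + 1038 : ℕ) : ℝ) * ρ < M + (582 : ℕ) := by
  obtain ⟨hN₁, hN₂⟩ := hN
  have hNpos : (0 : ℝ) < N := by exact_mod_cast (by omega : 0 < N)
  have hx : 254 * N < 453 * M := by
    have : (254 / 453 : ℝ) * N < M :=
      (mul_lt_mul_of_pos_right hlo hNpos).trans_le ((mul_comm ρ _).trans_le hM)
    rify
    linarith
  -- The bounds are Farey neighbours, `453 * 411 - 733 * 254 = 1`, so `N` is an integer combination
  -- of the two slacks `x` and `y`, and only a few values of `x` have to be tried.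
  have hy : 411 * (N + 1038) ≤ 733 * (M + 582) := by
    obtain ⟨x, hx'⟩ : ∃ x : ℤ, x = 453 * M - 254 * N := ⟨_, rfl⟩
    obtain ⟨y, hy'⟩ : ∃ y : ℤ, y = 733 * M - 411 * N := ⟨_, rfl⟩
    have hNxy : (N : ℤ) = 733 * x - 453 * y := by rw [hx', hy']; ring
    by_contra! hlt
    have : y < 12 := by omega
    have : 1 ≤ x := by omega
    have : x < 8 := by omega
    interval_cases x <;> omega
  calc ((N + 1038 : ℕ) : ℝ) * ρ < (N + 1038 : ℕ) * (411 / 733) := by gcongr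
    _ ≤ M + (582 : ℕ) := by
      rify at hy
      push_cast
      linarith

/-- The numerator of the `n`-th convergent `[0; a 1, …, a n]`. -/
def cfNum (a : ℕ → ℕ) : ℕ → ℕ
  | 0 => 0
  | 1 => 1
  | n + 2 => a (n + 2) * cfNum a (n + 1) + cfNum a n

/-- The denominator of the `n`-th convergent `[0; a 1, …, a n]`. -/
def cfDen (a : ℕ → ℕ) : ℕ → ℕ
  | 0 => 1
  | 1 => a 1
  | n + 2 => a (n + 2) * cfDen a (n + 1) + cfDen a n

namespace HasCF

theorem exists_mul_cfDen_eq_cfNum {θ : ℝ} {a : ℕ → ℕ} (h : HasCF θ a) (n : ℕ) :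
    ∃ t : ℝ, 0 < t ∧ t < 1 ∧
      θ * (cfDen a (n + 1) + cfDen a n * t) = cfNum a (n + 1) + cfNum a n * t := by
  obtain ⟨t, rfl, ht⟩ := h
  have quotient_mul (n : ℕ) : ((a (n + 1) : ℝ) + t (n + 1)) * t n = 1 := by
    rw [← (ht n).2.2, one_div_mul_cancel (ht n).1.ne']
  refine ⟨t (n + 1), (ht _).1, (ht _).2.1, ?_⟩
  induction n with
  | zero =>
    simp only [cfDen, cfNum]
    push_cast
    linarith [quotient_mul 0]
  | succ n ih =>
    refine mul_right_cancel₀ (ht (n + 1)).1.ne' ?_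
    simp only [cfDen, cfNum]
    push_cast
    linear_combination ih + (t 0 * cfDen a (n + 1) - cfNum a (n + 1)) * quotient_mul (n + 1)

theorem mem_Ioo {θ : ℝ} {a : ℕ → ℕ} (h : HasCF θ a) (ha1 : a 1 = 1) (ha2 : a 2 = 3)
    (ha : ∀ n, 3 ≤ n → n ≤ 11 → a n = 1) : θ ∈ Set.Ioo (322 / 411 : ℝ) (199 / 254) := by
  obtain ⟨t, ht0, ht1, ht⟩ := h.exists_mul_cfDen_eq_cfNum 10
  have hq : cfDen a 10 = 157 ∧ cfDen a 11 = 254 := by simp [cfDen, ha1, ha2, ha]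
  have hp : cfNum a 10 = 123 ∧ cfNum a 11 = 199 := by simp [cfNum, ha2, ha]
  rw [hq.1, hq.2, hp.1, hp.2] at ht
  push_cast at ht
  have hθ : θ = (199 + 123 * t) / (254 + 157 * t) := eq_div_of_mul_eq (by positivity) ht
  rw [hθ]
  constructor
  · rw [div_lt_div_iff₀ (by norm_num) (by positivity)]
    linarith
  · rw [div_lt_div_iff₀ (by positivity) (by norm_num)]
    linarith

end HasCF

theorem colourCyc_add_eq {δ n p q : ℕ} {u : ℕ → Bool} (hp : δ ∣ p) (hq : δ ∣ q)
    (hn : countBefore u true (n + p) = countBefore u true n + q)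
    (hn' : countBefore u true (n + 1 + p) = countBefore u true (n + 1) + q) :
    colourCyc δ u (n + p) = colourCyc δ u n := by
  have letter_eq : u (n + p) = u n := by
    rw [add_right_comm, countBefore_succ, countBefore_succ, hn] at hn'
    revert hn'
    cases u (n + p) <;> cases u n <;> simp
  have cast_p : (p : ZMod δ) = 0 := (ZMod.natCast_eq_zero_iff p δ).mpr hp
  have cast_q : (q : ZMod δ) = 0 := (ZMod.natCast_eq_zero_iff q δ).mpr hq
  have sum_n := congrArg (Nat.cast (R := ZMod δ)) (countBefore_true_add_countBefore_false u n)
  have sum_np :=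
    congrArg (Nat.cast (R := ZMod δ)) (countBefore_true_add_countBefore_false u (n + p))
  rw [hn] at sum_np
  push_cast at sum_n sum_np
  have true_eq : cyc δ (countBefore u true (n + p)) = cyc δ (countBefore u true n) := by
    rw [cyc, cyc, hn, Nat.cast_add, cast_q, add_zero]
  have false_eq : cyc δ (countBefore u false (n + p)) = cyc δ (countBefore u false n) := by
    rw [cyc, cyc]
    linear_combination sum_np - sum_n + cast_p - cast_q
  rw [colourCyc, colour, colour, letter_eq, true_eq, false_eq]

theorem div_le_expE_factorAt {v : ℕ → α} {i m p : ℕ} (hp : 0 < p)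
    (h : ∀ k < m, v (i + k + p) = v (i + k)) :
    ((p + m : ℕ) : ℝ≥0∞) / p ≤ expE (factorAt v i (p + m)) := by
  have isPeriod : IsPeriod (factorAt v i (p + m)) p := by
    refine ⟨hp, fun k hk => ?_⟩
    rw [length_factorAt] at hk
    rw [getElem?_factorAt v i (by omega), getElem?_factorAt v i hk, ← add_assoc, h k (by omega)]
  rw [expE, length_factorAt]
  exact ENNReal.div_le_div le_rfl (Nat.cast_le.mpr (Nat.sInf_le isPeriod))

theorem expE_le_criticalExponent {v : ℕ → α} {z : List α} (hz : IsFactor v z) (hne : z ≠ []) :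
    expE z ≤ criticalExponent v :=
  le_iSup₂_of_le (f := fun (z : List α) (_ : IsFactor v z ∧ z ≠ []) => expE z) z ⟨hz, hne⟩ le_rfl

theorem HasSlope.countBefore_add_1038 {u : ℕ → Bool} {θ : ℝ} (hθ : HasSlope u θ)
    (hu : IsStandard u) (hθ_mem : θ ∈ Set.Ioo (322 / 411 : ℝ) (199 / 254)) {n : ℕ}
    (hn : n + 1 ∈ Set.Icc 388 493) :
    countBefore u true (n + 1038) = countBefore u true n + 582 := by
  obtain ⟨hθ_lo, hθ_hi⟩ := hθ_mem
  have hρ_lo : 254 / 453 < 1 / (1 + θ) := by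
    rw [div_lt_div_iff₀ (by norm_num) (by linarith)]
    linarith
  have hρ_hi : 1 / (1 + θ) < 411 / 733 := by
    rw [div_lt_div_iff₀ (by linarith) (by norm_num)]
    linarith
  exact hθ.hasFreq_true.countBefore_add_eq hu (by push_cast; linarith)
    fun M hM => add_1038_mul_lt hρ_lo hρ_hi hn hM

theorem statement18_general (u : ℕ → Bool) (hu : IsStandard u)
    (θ : ℝ) (hθ : HasSlope u θ) (hθ_mem : θ ∈ Set.Ioo (322 / 411 : ℝ) (199 / 254)) :
    (11 : ℝ≥0∞) / 10 < criticalExponent (colourCyc 6 u) ∧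
    ∃ z : List (ZMod 6 ⊕ ZMod 6), IsFactor (colourCyc 6 u) z ∧ z ≠ [] ∧
      (1143 : ℝ≥0∞) / 1038 ≤ expE z := by
  have colour_shift : ∀ k < 105, colourCyc 6 u (387 + k + 1038) = colourCyc 6 u (387 + k) :=
    fun k hk => colourCyc_add_eq (q := 582) (by norm_num) (by norm_num)
      (hθ.countBefore_add_1038 hu hθ_mem ⟨by omega, by omega⟩)
      (hθ.countBefore_add_1038 hu hθ_mem ⟨by omega, by omega⟩)
  let z := factorAt (colourCyc 6 u) 387 (1038 + 105)
  have z_factor : IsFactor (colourCyc 6 u) z := isFactor_factorAt ..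
  have z_ne_nil : z ≠ [] := List.ne_nil_of_length_pos (by rw [length_factorAt]; norm_num)
  have exp_z : (1143 : ℝ≥0∞) / 1038 ≤ expE z := by
    exact_mod_cast div_le_expE_factorAt (by norm_num) colour_shift
  have eleven_tenths_lt : (11 : ℝ≥0∞) / 10 < 1143 / 1038 := by
    rw [← ENNReal.toReal_lt_toReal (ENNReal.div_ne_top (by simp) (by simp))
      (ENNReal.div_ne_top (by simp) (by simp))]
    norm_num
  exact ⟨eleven_tenths_lt.trans_le (exp_z.trans (expE_le_criticalExponent z_factor z_ne_nil)),
    z, z_factor, z_ne_nil, exp_z⟩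

theorem statement18 (u : ℕ → Bool) (hu : IsStandard u)
    (θ : ℝ) (hθ : HasSlope u θ) (a : ℕ → ℕ) (hcf : HasCF θ a)
    (ha1 : a 1 = 1) (ha2 : a 2 = 3) (ha : ∀ n, 3 ≤ n → a n = 1) :
    (11 : ℝ≥0∞) / 10 < criticalExponent (colourCyc 6 u) ∧
    ∃ z : List (ZMod 6 ⊕ ZMod 6), IsFactor (colourCyc 6 u) z ∧ z ≠ [] ∧
      (1143 : ℝ≥0∞) / 1038 ≤ expE z :=
  statement18_general u hu θ hθ (hcf.mem_Ioo ha1 ha2 fun n hn _ => ha n hn)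

end BalancedCE
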